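/- Let f ∈ ℱ, let j < k with k ≥ 1, let n < f(j), let ρ ∈ 𝒯_{f,j}, and let s_0, …, s_n ∈ 𝒮_{f,k} with ρ ∈ s_i for all i ≤ n. Then there exists ℓ ≤ f(j) such that ρ⌢⟨ℓ⟩ ∈ s_i for all i ≤ n. -/

import Mathlib

/-- `η ∈ 𝒯_f` : a finite sequence with `η(ℓ) ≤ f(ℓ)` for all `ℓ < lg(η)`. -/
def inT (f : ℕ → ℕ) (η : List ℕ) : Prop := ∀ i : Fin η.length, η.get i ≤ f i

/-- `𝒯_{f,k}` : elements of `𝒯_f` of length exactly `k`. -/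
def Tk (f : ℕ → ℕ) (k : ℕ) : Set (List ℕ) := {η | η.length = k ∧ inT f η}

/-- `𝒯_{f,[k]}` : elements of `𝒯_f` of length at most `k`. -/
def Tle (f : ℕ → ℕ) (k : ℕ) : Set (List ℕ) := {η | η.length ≤ k ∧ inT f η}

/-- `𝒯_f = ⋃_k 𝒯_{f,k}`. -/
def Tf (f : ℕ → ℕ) : Set (List ℕ) := {η | inT f η}

/-- The conditions on `s ⊆ 𝒯_{f,[k]}` prior to maximality: nonempty, closed
under initial segment, every `⊴`-maximal node is in `𝒯_{f,k}`, and `s`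
contains no full splitting `{ρ⌢⟨ℓ⟩ : ℓ ≤ f(lg ρ)}`. -/
def SBase (f : ℕ → ℕ) (k : ℕ) (s : Set (List ℕ)) : Prop :=
  s ⊆ Tle f k ∧ s.Nonempty ∧
  (∀ η ∈ s, ∀ ρ : List ℕ, ρ <+: η → ρ ∈ s) ∧
  (∀ ρ ∈ s, (∀ η ∈ s, ρ <+: η → η = ρ) → ρ.length = k) ∧
  (∀ ρ ∈ Tle f k, ¬ ∀ ℓ ≤ f ρ.length, ρ ++ [ℓ] ∈ s)

/-- `𝒮_{f,k}` : the `k`-maximal subsets of `𝒯_{f,[k]}`, i.e. those satisfying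
`SBase` and maximal under inclusion subject to it. -/
def Sk (f : ℕ → ℕ) (k : ℕ) : Set (Set (List ℕ)) :=
  {s | SBase f k s ∧ ∀ s', SBase f k s' → s ⊆ s' → s' = s}

/-- `𝒮_f = ⋃_{k ≥ 1} 𝒮_{f,k}`. -/
def Sf (f : ℕ → ℕ) : Set (Set (List ℕ)) := {s | ∃ k, 1 ≤ k ∧ s ∈ Sk f k}

/-- The restriction `η ↾ k = ⟨η 0, …, η (k-1)⟩` of `η : ℕ → ℕ`. -/
def restr (η : ℕ → ℕ) (k : ℕ) : List ℕ := List.map η (List.range k)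

/-- `lim(𝒯_f)` : branches of `𝒯_f`. -/
def limT (f : ℕ → ℕ) : Set (ℕ → ℕ) := {η | ∀ k, restr η k ∈ Tk f k}

/-- `lim(𝒮_f)` : sequences `⟨s_k : 1 ≤ k < ω⟩` with `s_k ∈ 𝒮_{f,k}`,
increasing under inclusion (the value at `0` is irrelevant). -/
def limS (f : ℕ → ℕ) : Set (ℕ → Set (List ℕ)) :=
  {ν | (∀ k, 1 ≤ k → ν k ∈ Sk f k) ∧ ∀ k k', 1 ≤ k → k < k' → ν k ⊆ ν k'}

theorem inT_prefix {f : ℕ → ℕ} {τ η : List ℕ} (h : τ <+: η) (hη : inT f η) : inT f τ := by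
  obtain ⟨r, rfl⟩ := h
  intro i
  have := hη ⟨i.1, by simp; omega⟩
  simpa [List.getElem_append_left] using this

theorem snoc_prefix_inj {σ η : List ℕ} {a b : ℕ} (h1 : σ ++ [a] <+: η) (h2 : σ ++ [b] <+: η) :
    a = b := by
  have := (List.prefix_of_prefix_length_le h1 h2 (by simp)).eq_of_length (by simp)
  simpa using this

theorem two_succ {f : ℕ → ℕ} (hf0 : ∀ k, 0 < f k) {k : ℕ} {s : Set (List ℕ)} (hs : s ∈ Sk f k)
    {ρ : List ℕ} (hρ : ρ ∈ s) (hlen : ρ.length < k) {a b : ℕ} (ha : a ≤ f ρ.length)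
    (hb : b ≤ f ρ.length) (hab : a ≠ b) (hna : ρ ++ [a] ∉ s) (hnb : ρ ++ [b] ∉ s) : False := by
  obtain ⟨⟨hsub, hne, hcl, hmax, hfull⟩, hM⟩ := hs
  obtain ⟨η, hη⟩ : ∃ η, η = (ρ ++ [a]) ++ List.replicate (k - ρ.length - 1) 0 := ⟨_, rfl⟩
  have hηlen : η.length = k := by rw [hη]; simp; omega
  have haη : ρ ++ [a] <+: η := ⟨_, hη.symm⟩
  have hρη : ρ <+: η := (List.prefix_append _ _).trans haη
  have hηT : inT f η := by
    subst hη
    intro i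
    have hρT := (hsub hρ).2
    rcases lt_trichotomy i.1 ρ.length with h | h | h
    · have := hρT ⟨i.1, h⟩
      simpa [List.getElem_append, h] using this
    · simpa [List.getElem_append, h] using ha
    · have h1 : ¬ i.1 < ρ.length := by omega
      have h2 : i.1 - ρ.length ≠ 0 := by omega
      have h3 : ¬ i.1 < ρ.length + 1 := by omega
      simp [List.getElem_append, h1, List.getElem_cons, h2]
  have hbase : SBase f k (s ∪ {τ | τ <+: η}) := by
    refine ⟨?_, ⟨ρ, Or.inl hρ⟩, ?_, ?_, ?_⟩
    · rintro τ (h | h)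
      · exact hsub h
      · exact ⟨hηlen ▸ h.length_le, inT_prefix h hηT⟩
    · rintro τ (h | h) σ hσ
      · exact Or.inl (hcl τ h σ hσ)
      · exact Or.inr (hσ.trans h)
    · rintro τ (h | h) hm
      · exact hmax τ h fun x hx => hm x (Or.inl hx)
      · rw [← hm η (Or.inr (List.prefix_refl η)) h, hηlen]
    · intro σ hσ hall
      have hex := hfull σ hσ
      push Not at hex
      obtain ⟨l, hl, hln⟩ := hex
      have hp : σ ++ [l] <+: η := (hall l hl).resolve_left hln
      have hση : σ <+: η := (List.prefix_append _ _).trans hp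
      rcases lt_trichotomy σ.length ρ.length with h | h | h
      · exact hln (hcl ρ hρ _ (List.prefix_of_prefix_length_le hp hρη (by simp; omega)))
      · have e : σ = ρ := (List.prefix_of_prefix_length_le hση hρη h.le).eq_of_length h
        subst e
        exact hab (snoc_prefix_inj haη ((hall b hb).resolve_left hnb))
      · have hpa : ρ ++ [a] <+: σ := List.prefix_of_prefix_length_le haη hση (by simp; omega)
        have hns : ∀ m, σ ++ [m] ∉ s := fun m hm =>
          hna (hcl _ hm _ (hpa.trans (List.prefix_append _ _)))
        have := snoc_prefix_inj ((hall 0 (Nat.zero_le _)).resolve_left (hns 0))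
          ((hall 1 (hf0 _)).resolve_left (hns 1))
        omega
  have := hM _ hbase Set.subset_union_left
  exact hna (this ▸ Or.inr haη)

/-- Pigeonhole step of quantifier elimination: if `j < k`, `k ≥ 1`,
`n < f(j)`, `ρ ∈ 𝒯_{f,j}` and `s_0, …, s_n ∈ 𝒮_{f,k}` all contain `ρ`, then
some immediate successor `ρ⌢⟨ℓ⟩` (`ℓ ≤ f(j)`) lies in every `s_i`. -/
theorem common_successor
    (f : ℕ → ℕ) (hf : StrictMono f) (hf0 : ∀ k, 0 < f k)
    (j k n : ℕ) (hk : 1 ≤ k) (hjk : j < k) (hn : n < f j)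
    (ρ : List ℕ) (hρ : ρ ∈ Tk f j)
    (s : ℕ → Set (List ℕ)) (hs : ∀ i ≤ n, s i ∈ Sk f k)
    (hρs : ∀ i ≤ n, ρ ∈ s i) :
    ∃ ℓ ≤ f j, ∀ i ≤ n, ρ ++ [ℓ] ∈ s i := by
  by_contra! hcon
  obtain ⟨hl, -⟩ := hρ
  choose! g hg1 hg2 using hcon
  obtain ⟨a, ha, b, hb, hab, he⟩ := Finset.exists_ne_map_eq_of_card_lt_of_maps_to
    (s := Finset.range (f j + 1)) (t := Finset.range (n + 1)) (f := g) (by simpa using hn)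
    (fun x hx => by
      have := hg1 x (by simpa [Nat.lt_succ_iff] using hx)
      simp; omega)
  have ha' : a ≤ f j := by simpa [Nat.lt_succ_iff] using ha
  have hb' : b ≤ f j := by simpa [Nat.lt_succ_iff] using hb
  subst hl
  exact two_succ hf0 (hs _ (hg1 a ha')) (hρs _ (hg1 a ha')) hjk ha' hb' hab (hg2 a ha')
    (he ▸ hg2 b hb')
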